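/- arXiv:1704.07943 — 3 statements merged into one kernel-verified Lean document; each statement's English description precedes it below -/
import Mathlib

section
/- Let G be a bipartite network with nonempty base-arm set 𝒩, let U ⊆ 𝒦 be nonempty with gaps Δ_j > 0 (j ∈ U), let O = 𝒦 \ U, and let J_i > 0 for i ∈ 𝒩. Let v denote the optimal value of LP P2 and c_μ the optimal value of LP P1. Then v ≤ (max_{i∈𝒩} J_i / min_{j∈U} Δ_j) · c_μ + |O|. (Upper inequality of Proposition 3.) -/
open Finset

/-- The support of base-arm `i`: actions `j` whose observation set `V j` contains `i`. -/
def support' {K N : Type*} [Fintype K] [DecidableEq N] (V : K → Finset N) (i : N) :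
    Finset K :=
  Finset.univ.filter (fun j => i ∈ V j)

/-!
Given a feasible point `w` of `P1`, scale it by `M = max J` and raise every coordinate outside `U`
to `1`. A base-arm observed by some action outside `U` is then covered by that action alone; for the
others the scaled constraint reads `M / J i ≥ 1`. The new point costs `M * ∑ j ∈ U, w j + |O|`, and
`min Δ * w j ≤ Δ j * w j` on `U` bounds it by the `P1` cost of `w`.
-/

theorem inf'_mul_sum_le {ι R : Type*} [Semiring R] [LinearOrder R] [IsOrderedRing R]
    {s : Finset ι} (hs : s.Nonempty) (f : ι → R) {x : ι → R} (hx : ∀ j ∈ s, 0 ≤ x j) :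
    s.inf' hs f * ∑ j ∈ s, x j ≤ ∑ j ∈ s, f j * x j := by
  rw [mul_sum]
  exact sum_le_sum fun j hj ↦ mul_le_mul_of_nonneg_right (inf'_le f hj) (hx j hj)

theorem le_mul_csInf_add {S : Set ℝ} (hS : S.Nonempty) {a k t : ℝ} (ha : 0 ≤ a)
    (h : ∀ s ∈ S, t ≤ a * s + k) : t ≤ a * sInf S + k := by
  rw [← sub_le_iff_le_add, ← smul_eq_mul, ← Real.sInf_smul_of_nonneg ha]
  refine le_csInf hS.smul_set ?_
  rintro _ ⟨s, hs, rfl⟩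
  exact sub_le_iff_le_add.2 (h s hs)

theorem mem_support' {K N : Type*} [Fintype K] [DecidableEq N] {V : K → Finset N} {i : N} {j : K} :
    j ∈ support' V i ↔ i ∈ V j := by
  simp only [support', mem_filter_univ]

/-- A nonnegative weighting `x` of the actions is a fractional cover of the demands `b` if every
base-arm `i` receives total weight at least `b i` from its support. These are the feasible points of
`P2` for `b = 1` and of `P1` for `b i = 1 / J i`. -/
structure IsFractionalCover {K N R : Type*} [Fintype K] [DecidableEq N] [AddCommMonoid R] [LE R]
    (V : K → Finset N) (b : N → R) (x : K → R) : Prop where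
  nonneg : ∀ j, 0 ≤ x j
  le_sum : ∀ i, b i ≤ ∑ j ∈ support' V i, x j

namespace IsFractionalCover

section OrderedAddCommMonoid

variable {K N R : Type*} [Fintype K] [DecidableEq N] [AddCommMonoid R] {V : K → Finset N}
  {b b' : N → R} {x y : K → R}

theorem mono [Preorder R] (hx : IsFractionalCover V b x) (hb : b' ≤ b) :
    IsFractionalCover V b' x where
  nonneg := hx.nonneg
  le_sum i := (hb i).trans (hx.le_sum i)

theorem of_exists_le [PartialOrder R] [IsOrderedAddMonoid R] (hx : ∀ j, 0 ≤ x j)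
    (h : ∀ i, ∃ j, i ∈ V j ∧ b i ≤ x j) : IsFractionalCover V b x where
  nonneg := hx
  le_sum i := by
    obtain ⟨j, hij, hj⟩ := h i
    exact hj.trans (single_le_sum (fun k _ ↦ hx k) (mem_support'.2 hij))

theorem exists_of_forall_exists_mem [LinearOrder R] [IsOrderedAddMonoid R]
    (hV : ∀ i, ∃ j, i ∈ V j) (b : N → R) : ∃ x, IsFractionalCover V b x := by
  have nonneg (i : N) : 0 ≤ max (b i) 0 := le_max_right _ _
  refine ⟨fun j ↦ ∑ i ∈ V j, max (b i) 0, of_exists_le (fun j ↦ sum_nonneg fun i _ ↦ nonneg i)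
    fun i ↦ ?_⟩
  obtain ⟨j, hij⟩ := hV i
  exact ⟨j, hij, (le_max_left _ _).trans (single_le_sum (fun k _ ↦ nonneg k) hij)⟩

theorem piecewise [DecidableEq K] [PartialOrder R] [IsOrderedAddMonoid R] {U : Finset K}
    (hx : IsFractionalCover V b x) (hy : ∀ j ∉ U, 0 ≤ y j)
    (hby : ∀ j ∉ U, ∀ i ∈ V j, b i ≤ y j) : IsFractionalCover V b (U.piecewise x y) := by
  have nonneg (j : K) : 0 ≤ U.piecewise x y j := by
    by_cases hj : j ∈ U
    · simpa only [piecewise_eq_of_mem _ _ _ hj] using hx.nonneg j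
    · simpa only [piecewise_eq_of_notMem _ _ _ hj] using hy j hj
  refine ⟨nonneg, fun i ↦ ?_⟩
  by_cases hiU : support' V i ⊆ U
  · calc
      b i ≤ ∑ j ∈ support' V i, x j := hx.le_sum i
      _ = ∑ j ∈ support' V i, U.piecewise x y j :=
        sum_congr rfl fun j hj ↦ (piecewise_eq_of_mem _ _ _ (hiU hj)).symm
  · obtain ⟨j, hji, hjU⟩ := not_subset.1 hiU
    calc
      b i ≤ y j := hby j hjU i (mem_support'.1 hji)
      _ = U.piecewise x y j := (piecewise_eq_of_notMem _ _ _ hjU).symm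
      _ ≤ ∑ j ∈ support' V i, U.piecewise x y j := single_le_sum (fun j _ ↦ nonneg j) hji

end OrderedAddCommMonoid

section OrderedSemiring

variable {K N R : Type*} [Fintype K] [DecidableEq N] [Semiring R] [PartialOrder R]
  [IsOrderedRing R] {V : K → Finset N} {b : N → R} {x : K → R} {c : R}

theorem smul (hx : IsFractionalCover V b x) (hc : 0 ≤ c) :
    IsFractionalCover V (c • b) (c • x) where
  nonneg j := mul_nonneg hc (hx.nonneg j)
  le_sum i := by
    simpa only [Pi.smul_apply, smul_eq_mul, mul_sum] using
      mul_le_mul_of_nonneg_left (hx.le_sum i) hc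

theorem exists_one_sum_eq [DecidableEq K] (hx : IsFractionalCover V b x) (hc : 0 ≤ c)
    (hcb : ∀ i, 1 ≤ c * b i) (U : Finset K) :
    ∃ z, IsFractionalCover V 1 z ∧ ∑ j, z j = c * ∑ j ∈ U, x j + #(univ \ U) := by
  refine ⟨U.piecewise (c • x) 1, ?_, ?_⟩
  · exact ((hx.smul hc).mono hcb).piecewise (fun _ _ ↦ zero_le_one) fun _ _ _ _ ↦ le_rfl
  · simp only [sum_piecewise, univ_inter, Pi.smul_apply, smul_eq_mul, ← mul_sum, Pi.one_apply,
      sum_const, nsmul_one]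

end OrderedSemiring

theorem sInf_le_sum {K N : Type*} [Fintype K] [DecidableEq N] {V : K → Finset N} {b : N → ℝ}
    {x : K → ℝ} (hx : IsFractionalCover V b x) :
    sInf {s : ℝ | ∃ z : K → ℝ, (∀ j, 0 ≤ z j) ∧ (∀ i, b i ≤ ∑ j ∈ support' V i, z j) ∧
      s = ∑ j, z j} ≤ ∑ j, x j := by
  refine csInf_le ⟨0, ?_⟩ ⟨x, hx.nonneg, hx.le_sum, rfl⟩
  rintro _ ⟨z, hz, -, rfl⟩
  exact sum_nonneg fun j _ ↦ hz j

end IsFractionalCover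

/-- upper inequality of Proposition 3. Let `v` be the optimal value of
LP `P2` and `c_μ` the optimal value of LP `P1`. Then
`v ≤ (max_{i∈𝒩} J_i / min_{j∈U} Δ_j) · c_μ + |O|`, where `O = 𝒦 \ U`. -/
theorem lp2_le_lp1
    {K N : Type*} [Fintype K] [Fintype N] [DecidableEq K] [DecidableEq N] [Nonempty N]
    (V : K → Finset N) (hsupp : ∀ i : N, ∃ j : K, i ∈ V j)
    (U : Finset K) (hU : U.Nonempty)
    (Δ : K → ℝ) (hΔ : ∀ j ∈ U, 0 < Δ j)
    (J : N → ℝ) (hJ : ∀ i : N, 0 < J i) :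
    sInf {s : ℝ | ∃ z : K → ℝ, (∀ j : K, 0 ≤ z j) ∧
        (∀ i : N, 1 ≤ ∑ j ∈ support' V i, z j) ∧ s = ∑ j, z j} ≤
      (Finset.univ.sup' Finset.univ_nonempty J / U.inf' hU Δ) *
        sInf {s : ℝ | ∃ w : K → ℝ, (∀ j : K, 0 ≤ w j) ∧
          (∀ i : N, 1 / J i ≤ ∑ j ∈ support' V i, w j) ∧ s = ∑ j ∈ U, Δ j * w j}
      + ((Finset.univ \ U).card : ℝ) := by
  set M := univ.sup' univ_nonempty J
  set d := U.inf' hU Δ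
  have J_le_M (i : N) : J i ≤ M := le_sup' J (mem_univ i)
  have M_pos : 0 < M := (hJ (Classical.arbitrary N)).trans_le (J_le_M _)
  have d_pos : 0 < d := (lt_inf'_iff hU).2 hΔ
  have one_le_M_mul (i : N) : 1 ≤ M * (1 / J i) :=
    ((one_le_div (hJ i)).2 (J_le_M i)).trans_eq (mul_one_div _ _).symm
  refine le_mul_csInf_add ?_ (div_pos M_pos d_pos).le ?_
  · obtain ⟨w, hw⟩ := IsFractionalCover.exists_of_forall_exists_mem hsupp fun i ↦ 1 / J i
    exact ⟨_, w, hw.nonneg, hw.le_sum, rfl⟩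
  · rintro _ ⟨w, w_nonneg, w_cover, rfl⟩
    obtain ⟨z, hz, sum_z⟩ :=
      (IsFractionalCover.mk w_nonneg w_cover).exists_one_sum_eq M_pos.le one_le_M_mul U
    have sum_w_le : ∑ j ∈ U, w j ≤ (∑ j ∈ U, Δ j * w j) / d :=
      (le_div_iff₀' d_pos).2 (inf'_mul_sum_le hU Δ fun j _ ↦ w_nonneg j)
    calc
      _ ≤ M * ∑ j ∈ U, w j + #(univ \ U) := hz.sInf_le_sum.trans_eq sum_z
      _ ≤ M * ((∑ j ∈ U, Δ j * w j) / d) + #(univ \ U) := by gcongr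
      _ = M / d * ∑ j ∈ U, Δ j * w j + #(univ \ U) := by rw [mul_div_assoc', div_mul_eq_mul_div]
end

section
/- Let G be a bipartite network with nonempty base-arm set 𝒩, let U ⊆ 𝒦 be nonempty with gaps Δ_j > 0 (j ∈ U), and let J_i > 0 for i ∈ 𝒩. Let v denote the optimal value of LP P2 and c_μ the optimal value of LP P1. Then v ≥ (min_{i∈𝒩} J_i / max_{j∈U} Δ_j) · c_μ. (Lower inequality of Proposition 3.) -/
open Finset

/-!
If `x` satisfies a covering program with demands `b`, then `r • x` satisfies the one with demands
`r • b`, so scaling the demands by `r` and the costs by `t` scales the optimal value by at most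
`t * r`. Since `1 / J i ≤ m⁻¹` and the costs of P1 are at most `D` times those of P2, where `m`
bounds `J` from below and `D` bounds `Δ` from above, P1 is dominated by P2 with `r = m⁻¹`, `t = D`.
-/

section Covering

open Matrix

variable {K N : Type*} [Fintype K]

/-- The feasible region of the covering linear program with constraint matrix `A` and demand
vector `b`. -/
def coveringPolyhedron (A : Matrix N K ℝ) (b : N → ℝ) : Set (K → ℝ) :=
  {x | 0 ≤ x ∧ b ≤ A *ᵥ x}

/-- The optimal value of the covering linear program with constraint matrix `A`, demand vector `b`
and cost vector `c`. As an infimum in `ℝ`, it is meaningful only when the program is feasible and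
bounded below. -/
noncomputable def coveringValue (A : Matrix N K ℝ) (b : N → ℝ) (c : K → ℝ) : ℝ :=
  sInf ((c ⬝ᵥ ·) '' coveringPolyhedron A b)

variable {A : Matrix N K ℝ} {b b' : N → ℝ} {c c' x : K → ℝ} {r t : ℝ}

lemma smul_mem_coveringPolyhedron (hr : 0 ≤ r) (hb : b' ≤ r • b)
    (hx : x ∈ coveringPolyhedron A b) : r • x ∈ coveringPolyhedron A b' := by
  refine ⟨smul_nonneg hr hx.1, ?_⟩
  calc b' ≤ r • b := hb
    _ ≤ r • A *ᵥ x := smul_le_smul_of_nonneg_left hx.2 hr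
    _ = A *ᵥ (r • x) := (mulVec_smul A r x).symm

lemma coveringValue_le (hc : 0 ≤ c) (hx : x ∈ coveringPolyhedron A b) :
    coveringValue A b c ≤ c ⬝ᵥ x := by
  refine csInf_le ⟨0, ?_⟩ (Set.mem_image_of_mem _ hx)
  rintro _ ⟨y, hy, rfl⟩
  exact dotProduct_nonneg_of_nonneg hc hy.1

theorem coveringValue_le_mul_coveringValue (hfeas : (coveringPolyhedron A b).Nonempty)
    (hr : 0 ≤ r) (ht : 0 ≤ t) (hc' : 0 ≤ c') (hb : b' ≤ r • b) (hc : c' ≤ t • c) :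
    coveringValue A b' c' ≤ t * r * coveringValue A b c := by
  rw [coveringValue, coveringValue, ← smul_eq_mul (t * r),
    ← Real.sInf_smul_of_nonneg (mul_nonneg ht hr)]
  refine le_csInf (hfeas.image _).smul_set ?_
  rintro _ ⟨_, ⟨x, hx, rfl⟩, rfl⟩
  calc coveringValue A b' c' ≤ c' ⬝ᵥ (r • x) :=
        coveringValue_le hc' (smul_mem_coveringPolyhedron hr hb hx)
    _ ≤ (t • c) ⬝ᵥ (r • x) := dotProduct_le_dotProduct_of_nonneg_right hc (smul_nonneg hr hx.1)
    _ = (t * r) • (c ⬝ᵥ x) := by rw [smul_dotProduct, dotProduct_smul, smul_smul]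

end Covering

section Network

open Matrix

variable {K N : Type*} [Fintype K] [DecidableEq N] {V : K → Finset N}

/-- The incidence matrix of the observation network: entry `(i, j)` is `1` when playing the action
`j` reveals the base-arm `i`. -/
def observationMatrix (V : K → Finset N) : Matrix N K ℝ :=
  of fun i j => if i ∈ V j then 1 else 0

lemma observationMatrix_mulVec (V : K → Finset N) (x : K → ℝ) (i : N) :
    (observationMatrix V *ᵥ x) i = ∑ j ∈ support' V i, x j := by
  simp [observationMatrix, mulVec, dotProduct, support', sum_filter]

lemma one_mem_coveringPolyhedron_observationMatrix (hsupp : ∀ i, ∃ j, i ∈ V j) :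
    1 ∈ coveringPolyhedron (observationMatrix V) 1 := by
  refine ⟨zero_le_one, fun i => ?_⟩
  obtain ⟨j, hj⟩ := hsupp i
  have hmem : j ∈ support' V i := by simp [support', hj]
  rw [observationMatrix_mulVec]
  exact single_le_sum (f := (1 : K → ℝ)) (fun _ _ => zero_le_one) hmem

lemma sInf_cover_eq_coveringValue (V : K → Finset N) (b : N → ℝ) (U : Finset K) (c : K → ℝ) :
    sInf {s : ℝ | ∃ x : K → ℝ, (∀ j, 0 ≤ x j) ∧ (∀ i, b i ≤ ∑ j ∈ support' V i, x j) ∧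
        s = ∑ j ∈ U, c j * x j} =
      coveringValue (observationMatrix V) b ((U : Set K).indicator c) := by
  classical
  have hcost (x : K → ℝ) : (U : Set K).indicator c ⬝ᵥ x = ∑ j ∈ U, c j * x j := by
    simp [dotProduct, Set.indicator_apply]
  simp only [coveringValue, coveringPolyhedron, Set.image, Set.mem_ofPred_eq, Pi.le_def,
    Pi.zero_apply, observationMatrix_mulVec, hcost, and_assoc, eq_comm]

theorem lp2_ge_lp1_general (hsupp : ∀ i, ∃ j, i ∈ V j) {U : Finset K} {Δ : K → ℝ}
    (hΔ : ∀ j ∈ U, 0 ≤ Δ j) {J : N → ℝ} {m D : ℝ} (hm : 0 < m) (hmJ : ∀ i, m ≤ J i)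
    (hD : 0 < D) (hΔD : ∀ j ∈ U, Δ j ≤ D) :
    m / D *
        sInf {s : ℝ | ∃ w : K → ℝ, (∀ j, 0 ≤ w j) ∧
          (∀ i, 1 / J i ≤ ∑ j ∈ support' V i, w j) ∧ s = ∑ j ∈ U, Δ j * w j} ≤
      sInf {s : ℝ | ∃ z : K → ℝ, (∀ j, 0 ≤ z j) ∧
        (∀ i, 1 ≤ ∑ j ∈ support' V i, z j) ∧ s = ∑ j, z j} := by
  have hP2 := sInf_cover_eq_coveringValue V 1 univ 1
  simp only [Pi.one_apply, one_mul, coe_univ, Set.indicator_univ] at hP2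
  rw [sInf_cover_eq_coveringValue, hP2]
  have hdemand : (fun i => 1 / J i) ≤ m⁻¹ • (1 : N → ℝ) := fun i => by
    simpa using inv_anti₀ hm (hmJ i)
  have hcost : (U : Set K).indicator Δ ≤ D • (1 : K → ℝ) :=
    Set.indicator_le' (fun j hj => by simpa using hΔD j hj) fun _ _ => by simpa using hD.le
  have hle := coveringValue_le_mul_coveringValue
    ⟨1, one_mem_coveringPolyhedron_observationMatrix hsupp⟩ (inv_nonneg.2 hm.le) hD.le
    (Set.indicator_nonneg hΔ) hdemand hcost
  calc m / D * coveringValue (observationMatrix V) (fun i => 1 / J i) ((U : Set K).indicator Δ)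
      ≤ m / D * (D * m⁻¹ * coveringValue (observationMatrix V) 1 1) := by gcongr
    _ = coveringValue (observationMatrix V) 1 1 := by field_simp

end Network

/-- lower inequality of Proposition 3. Let `v` be the optimal value of
LP `P2` and `c_μ` the optimal value of LP `P1`. Then
`v ≥ (min_{i∈𝒩} J_i / max_{j∈U} Δ_j) · c_μ`. -/
theorem lp2_ge_lp1
    {K N : Type*} [Fintype K] [Fintype N] [DecidableEq K] [DecidableEq N] [Nonempty N]
    (V : K → Finset N) (hsupp : ∀ i : N, ∃ j : K, i ∈ V j)
    (U : Finset K) (hU : U.Nonempty)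
    (Δ : K → ℝ) (hΔ : ∀ j ∈ U, 0 < Δ j)
    (J : N → ℝ) (hJ : ∀ i : N, 0 < J i) :
    (Finset.univ.inf' Finset.univ_nonempty J / U.sup' hU Δ) *
        sInf {s : ℝ | ∃ w : K → ℝ, (∀ j : K, 0 ≤ w j) ∧
          (∀ i : N, 1 / J i ≤ ∑ j ∈ support' V i, w j) ∧ s = ∑ j ∈ U, Δ j * w j} ≤
      sInf {s : ℝ | ∃ z : K → ℝ, (∀ j : K, 0 ≤ z j) ∧
        (∀ i : N, 1 ≤ ∑ j ∈ support' V i, z j) ∧ s = ∑ j, z j} := by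
  exact lp2_ge_lp1_general hsupp (fun j hj => (hΔ j hj).le)
    ((lt_inf'_iff _).2 fun i _ => hJ i) (fun i => inf'_le J (mem_univ i))
    ((lt_sup'_iff _).2 (hU.imp fun j hj => ⟨hj, hΔ j hj⟩)) (fun _ => le_sup' Δ)
end

section
/- Let 𝒦 be a finite set, let Δ_j ∈ (0,1] for j ∈ 𝒦, and for each j set m_j := min{m ∈ ℕ : 2^{−m} < Δ_j/2}. Let Z > 0 and define m̄ := min{m ∈ ℕ : Z > ∑_{a ∈ 𝒦 : m_a > m} 2^{−m+1}} (this minimum exists since the sum is 0 for m large), and B := {j ∈ 𝒦 : m_j > m̄}. Then ∑_{j∈B} Δ_j ≤ Z. (Key combinatorial step in the proof of Proposition 6, with Z = ∑_{j∈𝒦} z_j*, showing the total gap of late-eliminated actions is controlled by the LP value.) -/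
open Finset

/-! An action outlives round `m̄` only if its gap fails the elimination test of that very round, so
its gap is at most `2^{-m̄+1}`; and `m̄` is chosen so that these bounds add up to less than `Z`. -/

theorem exists_sum_filter_lt_lt {ι M : Type*} [AddCommMonoid M] [LT M] (s : Finset ι)
    (m : ι → ℕ) (f : ℕ → ι → M) {Z : M} (hZ : 0 < Z) :
    ∃ k, ∑ a ∈ s with k < m a, f k a < Z := by
  have no_survivors : s.filter (fun a => s.sup m < m a) = ∅ :=
    filter_eq_empty_iff.mpr fun _ ha => (le_sup ha).not_gt
  exact ⟨s.sup m, by rwa [no_survivors, sum_empty]⟩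

theorem le_two_zpow_of_lt_sInf {δ : ℝ} {k : ℕ}
    (hk : k < sInf {n : ℕ | (2 : ℝ) ^ (-(n : ℤ)) < δ / 2}) :
    δ ≤ (2 : ℝ) ^ (-(k : ℤ) + 1) := by
  have half_le : δ / 2 ≤ (2 : ℝ) ^ (-(k : ℤ)) := not_lt.mp (Nat.notMem_of_lt_sInf hk)
  rwa [zpow_add_one₀ two_ne_zero, ← div_le_iff₀ two_pos]

-- In the UCB-LP analysis `r k = 2^{-k+1}`, so that `r k < Δ j` is the elimination test of round `k`.
theorem late_eliminated_gap_sum_le_general {ι M : Type*} [AddCommMonoid M] [Preorder M]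
    [IsOrderedAddMonoid M] (s : Finset ι) (Δ : ι → M) (r : ℕ → M) {Z : M} (hZ : 0 < Z)
    (m : ι → ℕ) (hm : ∀ j ∈ s, ∀ k < m j, Δ j ≤ r k) (mbar : ℕ)
    (hmbar : mbar = sInf {k : ℕ | ∑ a ∈ s with k < m a, r k < Z}) :
    ∑ j ∈ s with mbar < m j, Δ j < Z := by
  have bound_lt : ∑ j ∈ s with mbar < m j, r mbar < Z :=
    hmbar ▸ Nat.sInf_mem (exists_sum_filter_lt_lt s m (fun k _ => r k) hZ)
  calc ∑ j ∈ s with mbar < m j, Δ j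
      ≤ ∑ j ∈ s with mbar < m j, r mbar := sum_le_sum fun j hj =>
        hm j (mem_filter.mp hj).1 mbar (mem_filter.mp hj).2
    _ < Z := bound_lt

/-- key combinatorial step in the proof of Proposition 6. Let `𝒦` be a
finite set, `Δ_j ∈ (0,1]`, `m_j = min{m : 2^{-m} < Δ_j/2}`, `Z > 0`,
`m̄ = min{m : Z > ∑_{a : m_a > m} 2^{-m+1}}`, and `B = {j : m_j > m̄}`. Then
`∑_{j ∈ B} Δ_j ≤ Z`. -/
theorem late_eliminated_gap_sum_le
    {K : Type*} [Fintype K] [DecidableEq K]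
    (Δ : K → ℝ) (hΔ0 : ∀ j, 0 < Δ j) (hΔ1 : ∀ j, Δ j ≤ 1)
    (Z : ℝ) (hZ : 0 < Z)
    (m : K → ℕ) (hm : ∀ j, m j = sInf {k : ℕ | (2 : ℝ) ^ (-(k : ℤ)) < Δ j / 2})
    (mbar : ℕ)
    (hmbar : mbar = sInf {k : ℕ |
      (∑ a ∈ Finset.univ.filter (fun a => k < m a), (2 : ℝ) ^ (-(k : ℤ) + 1)) < Z}) :
    ∑ j ∈ Finset.univ.filter (fun j => mbar < m j), Δ j ≤ Z :=
  (late_eliminated_gap_sum_le_general univ Δ (fun k => (2 : ℝ) ^ (-(k : ℤ) + 1)) hZ m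
    (fun j _ _ hk => le_two_zpow_of_lt_sInf (hm j ▸ hk)) mbar hmbar).le
end
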